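/- If A ∈ F₂[x] is an even perfect polynomial with exactly two distinct irreducible factors (ω(A) = 2), then A = x^{2ⁿ−1}(x+1)^{2ⁿ−1} for some positive integer n. -/

import Mathlib

/-!
Write `A = P ^ a * Q ^ b`. Multiplicativity of the divisor sum gives
`(1 + P + ⋯ + P ^ a) * (1 + Q + ⋯ + Q ^ b) = P ^ a * Q ^ b`, and since the first factor is coprime
to `P` and the second to `Q`, it follows that `1 + P + ⋯ + P ^ a = Q ^ b` and
`1 + Q + ⋯ + Q ^ b = P ^ a` (`geom_eq_pow`). As `A` is even, one of the two primes, say `P`, is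
`X + C r`.

* If `a` is even, differentiating `Q ^ b * (P + 1) = P ^ (a + 1) + 1` shows `b = 1`, for otherwise
  `Q` divides `P ^ a`. Then `1 + Q = P ^ a`, which forces `P ^ a = P`, contradicting that `a` is
  even.
* If `a` is odd, `P + 1` divides `1 + P + ⋯ + P ^ a = Q ^ b`, so `Q = P + 1`, and comparing degrees
  `b = a`. Hence `(P + 1) ^ (a + 1) = P ^ (a + 1) + 1`. Writing `a + 1 = 2 ^ k * m` with `m` odd and
  removing the Frobenius gives `(P + 1) ^ m = P ^ m + 1`; differentiating,
  `(P + 1) ^ (m - 1) = P ^ (m - 1)`, so `m = 1`.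
-/

open Polynomial

/-- The sum of all divisors of a polynomial over `F₂` (junk value `0` when the
divisor set is infinite, i.e. for `A = 0`). -/
noncomputable def sigma (A : Polynomial (ZMod 2)) : Polynomial (ZMod 2) :=
  ∑ᶠ (D : Polynomial (ZMod 2)) (_ : D ∣ A), D

/-- A binary polynomial is odd if it evaluates to `1` at both `0` and `1`. -/
def IsOdd (B : Polynomial (ZMod 2)) : Prop := B.eval 0 = 1 ∧ B.eval 1 = 1

/-- A binary polynomial is even if it is not odd. -/
def IsEven (B : Polynomial (ZMod 2)) : Prop := ¬ IsOdd B

/-- The number of pairwise distinct irreducible factors of a binary polynomial. -/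
noncomputable def omega (A : Polynomial (ZMod 2)) : ℕ :=
  {P : Polynomial (ZMod 2) | Irreducible P ∧ P ∣ A}.ncard

lemma eq_one_of_isUnit {u : Polynomial (ZMod 2)} (hu : IsUnit u) : u = 1 := by
  obtain ⟨r, hr, rfl⟩ := Polynomial.isUnit_iff.1 hu
  have : ∀ r : ZMod 2, IsUnit r → r = 1 := by decide
  rw [this r hr, C_1]

lemma X_add_C_eq (r : ZMod 2) : X + C r = X - C (-r) := by
  rw [C_neg, sub_neg_eq_add]

lemma eq_of_associated {p q : Polynomial (ZMod 2)} (h : Associated p q) : p = q := by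
  obtain ⟨u, rfl⟩ := h
  rw [eq_one_of_isUnit u.isUnit, mul_one]

lemma dvd_pow_eq {p d : Polynomial (ZMod 2)} (hp : Irreducible p) {n : ℕ} (h : d ∣ p ^ n) :
    ∃ i ≤ n, d = p ^ i := by
  obtain ⟨i, hi, h⟩ := (dvd_prime_pow hp.prime n).1 h
  exact ⟨i, hi, eq_of_associated h⟩

lemma isCoprime_of_ne {p q : Polynomial (ZMod 2)} (hp : Irreducible p) (hq : Irreducible q)
    (hne : p ≠ q) : IsCoprime p q := by
  rw [hp.coprime_iff_not_dvd]
  exact fun h => hne (eq_of_associated (hp.associated_of_dvd hq h))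

lemma le_of_pow_mul_pow {p q : Polynomial (ZMod 2)} (hp : Irreducible p) (h : IsCoprime p q)
    {i j i' j' : ℕ} (e : p ^ i * q ^ j = p ^ i' * q ^ j') : i ≤ i' := by
  have h1 : p ^ i ∣ p ^ i' * q ^ j' := e ▸ dvd_mul_right _ _
  have h2 : p ^ i ∣ p ^ i' := (h.pow : IsCoprime (p ^ i) (q ^ j')).dvd_of_dvd_mul_right h1
  exact (pow_dvd_pow_iff hp.ne_zero hp.not_isUnit).1 h2

lemma pow_mul_pow_inj {p q : Polynomial (ZMod 2)} (hp : Irreducible p) (hq : Irreducible q)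
    (h : IsCoprime p q) {i j i' j' : ℕ} (e : p ^ i * q ^ j = p ^ i' * q ^ j') :
    i = i' ∧ j = j' := by
  have e' : q ^ j * p ^ i = q ^ j' * p ^ i' := by rw [mul_comm, e, mul_comm]
  exact ⟨(le_of_pow_mul_pow hp h e).antisymm (le_of_pow_mul_pow hp h e.symm),
    (le_of_pow_mul_pow hq h.symm e').antisymm (le_of_pow_mul_pow hq h.symm e'.symm)⟩

lemma sigma_pow_mul_pow {p q : Polynomial (ZMod 2)} (hp : Irreducible p) (hq : Irreducible q)
    (h : IsCoprime p q) (a b : ℕ) :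
    sigma (p ^ a * q ^ b) =
      (∑ i ∈ Finset.range (a + 1), p ^ i) * ∑ j ∈ Finset.range (b + 1), q ^ j := by
  classical
  have hdiv : ∀ D : Polynomial (ZMod 2), D ∣ p ^ a * q ^ b ↔
      D ∈ (Finset.range (a + 1) ×ˢ Finset.range (b + 1)).image
        (fun x : ℕ × ℕ => p ^ x.1 * q ^ x.2) := by
    intro D
    simp only [Finset.mem_image, Finset.mem_product, Finset.mem_range, Prod.exists]
    constructor
    · intro hD
      obtain ⟨d1, d2, h1, h2, rfl⟩ := exists_dvd_and_dvd_of_dvd_mul hD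
      obtain ⟨i, hi, rfl⟩ := dvd_pow_eq hp h1
      obtain ⟨j, hj, rfl⟩ := dvd_pow_eq hq h2
      exact ⟨i, j, ⟨by omega, by omega⟩, rfl⟩
    · rintro ⟨i, j, ⟨hi, hj⟩, rfl⟩
      exact mul_dvd_mul (pow_dvd_pow _ (by omega)) (pow_dvd_pow _ (by omega))
  unfold sigma
  simp only [hdiv]
  rw [finsum_mem_finset_eq_sum, Finset.sum_image, Finset.sum_product, Finset.sum_mul_sum]
  rintro ⟨i, j⟩ _ ⟨i', j'⟩ _ e
  obtain ⟨rfl, rfl⟩ := pow_mul_pow_inj hp hq h e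
  rfl

lemma isCoprime_geom (p : Polynomial (ZMod 2)) (a : ℕ) :
    IsCoprime (∑ i ∈ Finset.range (a + 1), p ^ i) p := by
  rw [Finset.sum_range_succ']
  refine ⟨1, -∑ i ∈ Finset.range a, p ^ i, ?_⟩
  simp only [pow_succ, ← Finset.sum_mul]
  ring

/-- Each geometric factor of the divisor sum is the full prime power of the other prime. -/
lemma geom_eq_pow {p q : Polynomial (ZMod 2)} (hp : Irreducible p) (hq : Irreducible q)
    (h : IsCoprime p q) {a b : ℕ} (hs : sigma (p ^ a * q ^ b) = p ^ a * q ^ b) :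
    ∑ i ∈ Finset.range (a + 1), p ^ i = q ^ b ∧ ∑ j ∈ Finset.range (b + 1), q ^ j = p ^ a := by
  rw [sigma_pow_mul_pow hp hq h] at hs
  have h1 : ∑ i ∈ Finset.range (a + 1), p ^ i ∣ q ^ b :=
    (isCoprime_geom p a).pow_right.dvd_of_dvd_mul_left (hs ▸ dvd_mul_right _ _)
  have h2 : ∑ j ∈ Finset.range (b + 1), q ^ j ∣ p ^ a :=
    (isCoprime_geom q b).pow_right.dvd_of_dvd_mul_right (hs ▸ dvd_mul_left _ _)
  obtain ⟨c, -, hc⟩ := dvd_pow_eq hq h1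
  obtain ⟨d, -, hd⟩ := dvd_pow_eq hp h2
  rw [hc, hd, mul_comm] at hs
  obtain ⟨rfl, rfl⟩ := pow_mul_pow_inj hp hq h hs
  exact ⟨hc, hd⟩

lemma eq_pow_mul_pow {A p q : Polynomial (ZMod 2)} (hA : A ≠ 0) (hp : Irreducible p)
    (hq : Irreducible q) (hne : p ≠ q) (hpA : p ∣ A) (hqA : q ∣ A)
    (hall : ∀ r, Irreducible r → r ∣ A → r = p ∨ r = q) :
    ∃ a b : ℕ, 0 < a ∧ 0 < b ∧ A = p ^ a * q ^ b := by
  have hc := isCoprime_of_ne hp hq hne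
  obtain ⟨a, B, hB, rfl⟩ := WfDvdMonoid.max_power_factor hA hp
  have hB0 : B ≠ 0 := right_ne_zero_of_mul hA
  obtain ⟨b, C', hC, rfl⟩ := WfDvdMonoid.max_power_factor hB0 hq
  have hC0 : C' ≠ 0 := right_ne_zero_of_mul hB0
  have hu : IsUnit C' := by
    by_contra hu
    obtain ⟨r, hr, hrC⟩ := WfDvdMonoid.exists_irreducible_factor hu hC0
    rcases hall r hr ((hrC.mul_left _).mul_left _) with rfl | rfl
    · exact hB (hrC.mul_left _)
    · exact hC hrC
  obtain rfl : C' = 1 := eq_one_of_isUnit hu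
  rw [mul_one] at hB hpA hqA ⊢
  refine ⟨a, b, Nat.pos_of_ne_zero ?_, Nat.pos_of_ne_zero ?_, rfl⟩
  · rintro rfl
    rw [pow_zero, one_mul] at hpA
    exact hB hpA
  · rintro rfl
    rw [pow_zero, mul_one] at hqA
    exact hne (eq_of_associated (hq.associated_of_dvd hp (hq.prime.dvd_of_dvd_pow hqA))).symm

/-- The derivative of `(p + 1) ^ n = p ^ n + 1` rules out odd `n > 1`; Frobenius handles the
`2`-part of `n`. -/
lemma pow_two_of_add_one_pow {p : Polynomial (ZMod 2)} (hp : Irreducible p)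
    (hder : derivative p = 1) {n : ℕ} (hn : n ≠ 0) (h : (p + 1) ^ n = p ^ n + 1) :
    ∃ k, n = 2 ^ k := by
  obtain ⟨k, m, hm, rfl⟩ := Nat.exists_eq_two_pow_mul_odd hn
  refine ⟨k, ?_⟩
  have h1 : (p + 1) ^ m = p ^ m + 1 := by
    apply iterateFrobenius_inj (Polynomial (ZMod 2)) 2 k
    simp only [iterateFrobenius_def, ← pow_mul, mul_comm m]
    rw [h, add_pow_char_pow, ← pow_mul, mul_comm m, one_pow]
  obtain ⟨t, rfl⟩ := hm
  have h2 := congrArg derivative h1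
  have h3 : ((2 * t + 1 : ℕ) : ZMod 2) = 1 := by
    have h4 : (2 : ZMod 2) = 0 := by decide
    push_cast
    linear_combination (t : ZMod 2) * h4
  rw [derivative_pow, derivative_add, derivative_add, derivative_pow, hder, h3, derivative_one,
    C_1, Nat.add_sub_cancel] at h2
  simp only [add_zero, mul_one, one_mul] at h2
  have h4 : t = 0 := by
    by_contra ht
    have h5 : p ∣ (p + 1) ^ (2 * t) := h2 ▸ dvd_pow_self p (by omega)
    have h6 := hp.prime.dvd_of_dvd_pow h5
    exact hp.not_isUnit (isUnit_of_dvd_one ((dvd_add_right dvd_rfl).1 h6))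
  subst h4
  simp

/-- The case in which the prime `p` is linear. -/
lemma linear_case {p q : Polynomial (ZMod 2)} (hp : Irreducible p) (hq : Irreducible q)
    (hne : p ≠ q) {r : ZMod 2} (hpr : p = X + C r) {a b : ℕ} (ha : 0 < a) (hb : 0 < b)
    (h1 : ∑ i ∈ Finset.range (a + 1), p ^ i = q ^ b)
    (h2 : ∑ j ∈ Finset.range (b + 1), q ^ j = p ^ a) :
    ∃ n : ℕ, 0 < n ∧ p ^ a * q ^ b = p ^ (2 ^ n - 1) * (p + 1) ^ (2 ^ n - 1) := by
  have hder : derivative p = 1 := by simp [hpr]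
  have hdeg : p.natDegree = 1 := by rw [hpr, natDegree_X_add_C]
  have h0 : (2 : Polynomial (ZMod 2)) = 0 := CharTwo.two_eq_zero
  have hgeom : q ^ b * (p + 1) = p ^ (a + 1) + 1 := by
    have := geom_sum_mul p (a + 1)
    rw [h1] at this
    linear_combination this + (q ^ b - 1) * h0
  rcases Nat.even_or_odd a with ⟨t, rfl⟩ | ⟨t, rfl⟩
  · exfalso
    have hb1 : b = 1 := by
      by_contra hb1
      obtain ⟨s, rfl⟩ : ∃ s, b = s + 2 := ⟨b - 2, by omega⟩
      have hd := congrArg derivative hgeom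
      have hcast : ((t : Polynomial (ZMod 2)) + t) = 0 := CharTwo.add_self_eq_zero _
      simp [derivative_pow, hder, hcast] at hd
      have hdvd : q ∣ p ^ (t + t) := by
        rw [← hd, pow_succ, pow_succ]
        refine dvd_add ?_ ?_
        · exact ((((dvd_mul_left q _).mul_left _).mul_right _).mul_right _)
        · exact dvd_mul_left _ _
      exact hne (eq_of_associated
        (hq.associated_of_dvd hp (hq.prime.dvd_of_dvd_pow hdvd))).symm
    subst hb1
    simp only [Finset.sum_range_succ, Finset.sum_range_zero, pow_zero, pow_one, zero_add] at h2
    have h3 : p ^ (t + t) = p ^ 1 := by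
      rw [pow_succ p, ← h2, pow_one] at hgeom
      rw [← h2]
      linear_combination hgeom + h0
    have h4 := congrArg natDegree h3
    rw [natDegree_pow, natDegree_pow, hdeg] at h4
    omega
  · have hqp : q = p + 1 := by
      have hp1 : Irreducible (p + 1) := by
        rw [hpr, add_assoc, ← C_1, ← C_add, X_add_C_eq]
        exact irreducible_X_sub_C _
      have hdvd : p + 1 ∣ q ^ b := by
        have : ∑ i ∈ Finset.range (2 * t + 1 + 1), p ^ i =
            (p + 1) * ∑ i ∈ Finset.range (t + 1), (p ^ 2) ^ i := by
          clear * -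
          induction t with
          | zero => simp [Finset.sum_range_succ, add_comm]
          | succ t ih =>
            rw [show 2 * (t + 1) + 1 + 1 = 2 * t + 1 + 1 + 1 + 1 by ring, Finset.sum_range_succ,
              Finset.sum_range_succ, ih, Finset.sum_range_succ _ (t + 1)]
            ring
        rw [← h1, this]
        exact dvd_mul_right _ _
      exact (eq_of_associated
        (hp1.associated_of_dvd hq (hp1.prime.dvd_of_dvd_pow hdvd))).symm
    have hqdeg : q.natDegree = 1 := by
      rw [hqp, hpr, add_assoc, ← C_1, ← C_add, natDegree_X_add_C]
    have hdb : b + 1 = 2 * t + 1 + 1 := by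
      have h4 := congrArg natDegree hgeom
      rw [← hqp, ← pow_succ, natDegree_pow, ← C_1, natDegree_add_C, natDegree_pow, hdeg,
        hqdeg] at h4
      omega
    have hb' : b = 2 * t + 1 := by omega
    subst hb'
    rw [hqp, ← pow_succ] at hgeom
    obtain ⟨k, hk⟩ := pow_two_of_add_one_pow hp hder (by omega) hgeom
    refine ⟨k, Nat.pos_of_ne_zero ?_, ?_⟩
    · rintro rfl
      omega
    · rw [← hk, hqp]
      rfl

/-- An even perfect polynomial with exactly two distinct irreducible factors is
`x^{2ⁿ−1}(x+1)^{2ⁿ−1}` for some `n ≥ 1`. -/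
theorem statement18 (A : Polynomial (ZMod 2)) (heven : IsEven A)
    (hperf : sigma A = A) (homega : omega A = 2) :
    ∃ n : ℕ, 0 < n ∧ A = X ^ (2 ^ n - 1) * (X + 1) ^ (2 ^ n - 1) := by
  obtain ⟨P, Q, hne, hset⟩ := Set.ncard_eq_two.1 homega
  have hmem : ∀ R, Irreducible R ∧ R ∣ A ↔ R = P ∨ R = Q := fun R => by
    simpa using Set.ext_iff.1 hset R
  have hlin : ∀ r : ZMod 2, Irreducible (X + C r : Polynomial (ZMod 2)) := fun r => by
    rw [X_add_C_eq]
    exact irreducible_X_sub_C _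
  have h11 : (1 + 1 : ZMod 2) = 0 := by decide
  -- The zero polynomial has at least three irreducible divisors: `X`, `X + 1` and any
  -- irreducible factor of `X ^ 2 + X + 1`.
  have hA : A ≠ 0 := by
    rintro rfl
    have hdeg : (X ^ 2 + X + 1 : Polynomial (ZMod 2)).natDegree = 2 := by compute_degree!
    obtain ⟨R, hR, hRd⟩ := WfDvdMonoid.exists_irreducible_factor
      (a := (X ^ 2 + X + 1 : Polynomial (ZMod 2)))
      (fun h => by rw [eq_one_of_isUnit h] at hdeg; simp at hdeg)
      (fun h => by rw [h] at hdeg; simp at hdeg)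
    have e0 := (hmem (X + C 0)).1 ⟨hlin 0, dvd_zero _⟩
    have e1 := (hmem (X + C 1)).1 ⟨hlin 1, dvd_zero _⟩
    have eR := (hmem R).1 ⟨hR, dvd_zero _⟩
    have n01 : (X + C 0 : Polynomial (ZMod 2)) ≠ X + C 1 := by simp
    have key : ∀ r : ZMod 2, R ≠ X + C r := by
      rintro r rfl
      rw [X_add_C_eq, dvd_iff_isRoot] at hRd
      simp only [IsRoot, eval_add, eval_pow, eval_X, eval_one] at hRd
      clear hR eR
      revert hRd
      generalize -r = s
      revert s
      decide
    have k0 := key 0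
    have k1 := key 1
    grind
  obtain ⟨r, hr⟩ : ∃ r : ZMod 2, X + C r ∣ A := by
    have : ∃ r : ZMod 2, A.eval r = 0 := by
      by_contra! hcon
      have h2 : ∀ z : ZMod 2, z ≠ 0 → z = 1 := by decide
      exact heven ⟨h2 _ (hcon 0), h2 _ (hcon 1)⟩
    obtain ⟨r, hr⟩ := this
    refine ⟨-r, ?_⟩
    rw [C_neg, ← sub_eq_add_neg]
    exact dvd_iff_isRoot.2 hr
  wlog hP : X + C r = P generalizing P Q
  · exact this Q P hne.symm (by rw [hset, Set.pair_comm]) (fun R => by rw [hmem, or_comm])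
      (((hmem _).1 ⟨hlin r, hr⟩).resolve_left hP)
  obtain ⟨hp, hpA⟩ := (hmem P).2 (Or.inl rfl)
  obtain ⟨hq, hqA⟩ := (hmem Q).2 (Or.inr rfl)
  obtain ⟨a, b, ha, hb, rfl⟩ := eq_pow_mul_pow hA hp hq hne hpA hqA
    (fun R h1 h2 => (hmem R).1 ⟨h1, h2⟩)
  obtain ⟨h1, h2⟩ := geom_eq_pow hp hq (isCoprime_of_ne hp hq hne) hperf
  obtain ⟨n, hn, h⟩ := linear_case hp hq hne hP.symm ha hb h1 h2
  refine ⟨n, hn, ?_⟩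
  rw [h, ← hP]
  have hr2 : ∀ r : ZMod 2, r = 0 ∨ r = 1 := by decide
  rcases hr2 r with rfl | rfl
  · simp
  · rw [add_assoc, ← C_1, ← C_add, h11, C_0, add_zero, mul_comm]
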